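/- Fix integers d ≥ 3 and 2 ≤ j ≤ d−1. Let P(d,j) ⊂ ℝ^d be the convex hull of 0, e₁,…,e_{d−1}, and e₁+⋯+e_j + j·e_d. Then the δ-vector of P(d,j) is (1,0,1,1,…,1,0,…,0) with j−1 ones in positions 2 through j; in particular the normalized volume of P(d,j) is j, δ₁ = 0 (so P(d,j) is an empty simplex), and μ_Ehr(P(d,j)) = j. -/

import Mathlib

open scoped BigOperators Pointwise

/-- Points of `ℝ^N`. -/
abbrev Pt (N : ℕ) := Fin N → ℝ

/-- A point has integer coordinates. -/
def IsLat {N : ℕ} (x : Pt N) : Prop := ∀ i, ∃ z : ℤ, x i = (z : ℝ)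

/-- Lattice points of a set. -/
def latPts {N : ℕ} (P : Set (Pt N)) : Set (Pt N) := {x ∈ P | IsLat x}

/-- The dilated polytope `kP`. -/
def dil {N : ℕ} (k : ℕ) (P : Set (Pt N)) : Set (Pt N) := (k : ℝ) • P

/-- `α` is a sum of `k` lattice points of `P`. -/
def DecomposesIn {N : ℕ} (P : Set (Pt N)) (k : ℕ) (α : Pt N) : Prop :=
  ∃ f : Fin k → Pt N, (∀ i, f i ∈ latPts P) ∧ α = ∑ i, f i

/-- The integer decomposition property. -/
def HasIDP {N : ℕ} (P : Set (Pt N)) : Prop :=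
  ∀ k : ℕ, 0 < k → ∀ α ∈ latPts (dil k P), DecomposesIn P k α

/-- Very ampleness: decomposition holds for all sufficiently large `k`. -/
def VeryAmple {N : ℕ} (P : Set (Pt N)) : Prop :=
  ∃ k₀ : ℕ, ∀ k, k₀ ≤ k → ∀ α ∈ latPts (dil k P), DecomposesIn P k α

/-- An integral convex polytope: the convex hull of finitely many lattice points
(which include all its vertices). -/
def IsIntegralPolytope {N : ℕ} (P : Set (Pt N)) : Prop :=
  ∃ V : Finset (Pt N), (∀ v ∈ V, IsLat v) ∧ P = convexHull ℝ (V : Set (Pt N))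

/-- Dimension of a polytope: the rank of the direction of its affine span. -/
noncomputable def polyDim {N : ℕ} (P : Set (Pt N)) : ℕ :=
  Module.finrank ℝ (affineSpan ℝ P).direction

/-- Lattice points of the cone `C(P) ⊂ ℝ^{N+1}` generated by `P̃ = P × {1}`;
a point of `ℝ^{N+1}` is represented as a pair `(x, deg)`. -/
def coneLat {N : ℕ} (P : Set (Pt N)) : Set (Pt N × ℝ) :=
  {p | (∃ (m : ℕ) (c : Fin m → ℝ) (w : Fin m → Pt N),
        (∀ i, 0 ≤ c i ∧ w i ∈ P) ∧ p.1 = ∑ i, c i • w i ∧ p.2 = ∑ i, c i)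
    ∧ IsLat p.1 ∧ ∃ z : ℤ, p.2 = (z : ℝ)}

/-- The monoid `ℤ_{≥0}(P̃ ∩ ℤ^{N+1})` generated by the degree-one lattice points of the cone. -/
def genMonoid {N : ℕ} (P : Set (Pt N)) : Set (Pt N × ℝ) :=
  {p | ∃ (m : ℕ) (f : Fin m → Pt N), (∀ i, f i ∈ latPts P) ∧
        p.1 = ∑ i, f i ∧ p.2 = (m : ℝ)}

/-- `H` is the minimal Hilbert basis of the cone `C(P)`. -/
def IsMinHilbertBasis {N : ℕ} (P : Set (Pt N)) (H : Set (Pt N × ℝ)) : Prop :=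
  (H.Finite ∧ H ⊆ coneLat P ∧
      coneLat P ⊆ (AddSubmonoid.closure H : Set (Pt N × ℝ))) ∧
  ∀ H' : Set (Pt N × ℝ),
    (H'.Finite ∧ H' ⊆ coneLat P ∧
      coneLat P ⊆ (AddSubmonoid.closure H' : Set (Pt N × ℝ))) → H ⊆ H'

/-- `v` lists the vertices of an empty `d`-simplex contained in `P`. -/
def EmptySimplexIn {N : ℕ} (P : Set (Pt N)) (d : ℕ) (v : Fin (d+1) → Pt N) : Prop :=
  (∀ i, v i ∈ latPts P) ∧ AffineIndependent ℝ v ∧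
    ∀ x ∈ convexHull ℝ (Set.range v), IsLat x → x ∈ Set.range v

/-- `Box(S)` of a simplex with vertex list `v`: lattice points
`Σ rᵢ (vᵢ, 1)` with `0 ≤ rᵢ < 1`. -/
def boxSimplex {N d : ℕ} (v : Fin (d+1) → Pt N) : Set (Pt N × ℝ) :=
  {p | ∃ r : Fin (d+1) → ℝ, (∀ i, 0 ≤ r i ∧ r i < 1) ∧
      p.1 = ∑ i, r i • v i ∧ p.2 = ∑ i, r i ∧ IsLat p.1 ∧ ∃ z : ℤ, p.2 = (z : ℝ)}

/-- `Box(P)`: holes of `P`, i.e. box points of empty `d`-simplices in `P` that are not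
nonnegative integer combinations of `P̃ ∩ ℤ^{N+1}`. -/
def boxP {N : ℕ} (P : Set (Pt N)) (d : ℕ) : Set (Pt N × ℝ) :=
  (⋃ v ∈ {v : Fin (d+1) → Pt N | EmptySimplexIn P d v}, boxSimplex v) \ genMonoid P

/-- Ehrhart counting function `|nP ∩ ℤ^N|`. -/
noncomputable def ehr {N : ℕ} (P : Set (Pt N)) (n : ℕ) : ℕ := (latPts (dil n P)).ncard

/-- The `δ`-vector of a `d`-dimensional polytope, via finite differences of the
Ehrhart counting function. -/
noncomputable def deltaVec {N : ℕ} (P : Set (Pt N)) (d i : ℕ) : ℤ :=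
  ∑ j ∈ Finset.range (i+1), (-1)^j * ((d+1).choose j) * (ehr P (i - j) : ℤ)

/-- Vertex set of the simplex `P(d,j)`: `0`, `e₁, …, e_{d-1}`, and
`e₁ + ⋯ + e_j + j·e_d`. -/
def Vdj (d j : ℕ) : Set (Pt d) :=
  {0} ∪ {x : Pt d | ∃ k : Fin d, (k : ℕ) < d - 1 ∧ x = fun l => if l = k then (1:ℝ) else 0}
    ∪ {(fun k => (if (k : ℕ) + 1 ≤ j then (1:ℝ) else 0) + (if (k : ℕ) = d - 1 then (j:ℝ) else 0) : Pt d)}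

/-- The simplex `P(d,j) ⊂ ℝ^d`. -/
def Pdj (d j : ℕ) : Set (Pt d) := convexHull ℝ (Vdj d j)

/-- Last index. -/
def LL (d : ℕ) (hd : 0 < d) : Fin d := ⟨d - 1, by omega⟩

/-- The vertices indexed by `Fin d`. -/
noncomputable def zv (d j : ℕ) (k : Fin d) : Pt d :=
  if (k : ℕ) = d - 1 then
    (fun k => (if (k : ℕ) + 1 ≤ j then (1:ℝ) else 0) + (if (k : ℕ) = d - 1 then (j:ℝ) else 0))
  else fun l => if l = k then (1:ℝ) else 0

/-- Barycentric-like coordinates. -/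
noncomputable def cc (d j : ℕ) (hd : 0 < d) (x : Pt d) (k : Fin d) : ℝ :=
  x k - (if (k : ℕ) + 1 ≤ j then x (LL d hd) / j else 0)
    - (if k = LL d hd then x (LL d hd) - x (LL d hd) / j else 0)

/-- The region described by inequalities. -/
def Reg (d j : ℕ) (hd : 0 < d) (t : ℝ) : Set (Pt d) :=
  {x | (∀ k, 0 ≤ cc d j hd x k) ∧ ∑ k, cc d j hd x k ≤ t}

lemma cc_add (d j : ℕ) (hd : 0 < d) (x y : Pt d) (k : Fin d) (a b : ℝ) :
    cc d j hd (a • x + b • y) k = a * cc d j hd x k + b * cc d j hd y k := by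
  simp only [cc, Pi.add_apply, Pi.smul_apply, smul_eq_mul]
  split_ifs <;> ring

lemma cc_smul (d j : ℕ) (hd : 0 < d) (x : Pt d) (k : Fin d) (a : ℝ) :
    cc d j hd (a • x) k = a * cc d j hd x k := by
  simpa using cc_add d j hd x 0 k a 0

lemma eq_LL {d : ℕ} (hd : 0 < d) (k : Fin d) : (k : ℕ) = d - 1 ↔ k = LL d hd := by
  simp [LL, Fin.ext_iff]

lemma cc_zv (d j : ℕ) (hd : 0 < d) (hj : 0 < j) (hjd : j ≤ d - 1) (i k : Fin d) :
    cc d j hd (zv d j i) k = if k = i then 1 else 0 := by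
  have hj0 : (j : ℝ) ≠ 0 := by positivity
  have hL : ¬ ((LL d hd : Fin d) : ℕ) + 1 ≤ j := by simp [LL]; omega
  have hL' : ((LL d hd : Fin d) : ℕ) = d - 1 := rfl
  have hL2 : ¬ d - 1 + 1 ≤ j := by omega
  have hL3 : ¬ d - 1 < j := by omega
  by_cases hi : i = LL d hd
  · subst hi
    by_cases hk : k = LL d hd
    · subst hk
      simp [cc, zv, hL2, hL3, hL', hj0]
    · have : ¬ (k : ℕ) = d - 1 := by rwa [eq_LL hd]
      simp only [cc, zv, hL2, hL3, hL', hk, this, if_true, if_false]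
      split_ifs <;> simp [hj0]
  · have h1 : ¬ (i : ℕ) = d - 1 := by rwa [eq_LL hd]
    have h2 : ¬ LL d hd = i := fun h => hi h.symm
    simp [cc, zv, h1, h2]

lemma zv_mem (d j : ℕ) (i : Fin d) : zv d j i ∈ Vdj d j := by
  unfold zv Vdj
  split_ifs with h
  · right; rfl
  · left; right; exact ⟨i, by omega, rfl⟩

lemma Vdj_cases (d j : ℕ) (hd : 0 < d) {v : Pt d} (hv : v ∈ Vdj d j) :
    v = 0 ∨ ∃ i, v = zv d j i := by
  rcases hv with (hv | ⟨k, hk, rfl⟩) | hv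
  · left; exact hv
  · right; refine ⟨k, ?_⟩
    have : ¬ (k : ℕ) = d - 1 := by omega
    simp [zv, this]
  · right; refine ⟨LL d hd, ?_⟩
    simpa [zv, LL] using hv

lemma sum_cc_zv (d j : ℕ) (hd : 0 < d) (hj : 0 < j) (hjd : j ≤ d - 1) (x : Pt d) :
    x = ∑ k, cc d j hd x k • zv d j k := by
  have hj0 : (j : ℝ) ≠ 0 := by positivity
  have hL : ¬ ((LL d hd : Fin d) : ℕ) + 1 ≤ j := by simp [LL]; omega
  have hL' : ((LL d hd : Fin d) : ℕ) = d - 1 := rfl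
  have hL2 : ¬ d - 1 + 1 ≤ j := by omega
  have hL3 : ¬ d - 1 < j := by omega
  funext l
  rw [Finset.sum_apply, ← Finset.add_sum_erase _ _ (Finset.mem_univ (LL d hd))]
  have : ∀ k ∈ Finset.univ.erase (LL d hd), (cc d j hd x k • zv d j k) l
      = if l = k then cc d j hd x k else 0 := by
    intro k hk
    have h1 : ¬ (k : ℕ) = d - 1 := by rw [eq_LL hd]; exact (Finset.mem_erase.1 hk).1
    simp [zv, h1]
  rw [Finset.sum_congr rfl this, Finset.sum_ite_eq]
  by_cases hl : l = LL d hd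
  · subst hl
    simp [cc, zv, hL2, hL3, hL', hj0]
  · have : ¬ (l : ℕ) = d - 1 := by rwa [eq_LL hd]
    simp only [cc, zv, hL2, hL3, hL', hl, this, if_true, if_false, Pi.smul_apply, smul_eq_mul,
      Finset.mem_erase, Finset.mem_univ, ne_eq, not_false_eq_true, and_true]
    split_ifs <;> simp

lemma Pdj_sub (d j : ℕ) (hd : 0 < d) (hj : 0 < j) (hjd : j ≤ d - 1) :
    Pdj d j ⊆ Reg d j hd 1 := by
  apply convexHull_min
  · intro v hv
    rcases Vdj_cases d j hd hv with rfl | ⟨i, rfl⟩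
    · simp [Reg, cc]
    · simp only [Reg, Set.mem_setOf_eq, cc_zv d j hd hj hjd]
      refine ⟨fun k => by split_ifs <;> norm_num, by simp⟩
  · rintro x ⟨hx, hx'⟩ y ⟨hy, hy'⟩ a b ha hb hab
    refine ⟨fun k => ?_, ?_⟩
    · rw [cc_add]
      have := hx k; have := hy k; positivity
    · simp only [cc_add, Finset.sum_add_distrib, ← Finset.mul_sum]
      nlinarith

lemma Reg_sub (d j : ℕ) (hd : 0 < d) (hj : 0 < j) (hjd : j ≤ d - 1) :
    Reg d j hd 1 ⊆ Pdj d j := by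
  rintro x ⟨hx, hx'⟩
  have := (convex_convexHull ℝ (Vdj d j)).sum_mem (t := Finset.univ)
    (w := fun o : Option (Fin d) => o.elim (1 - ∑ k, cc d j hd x k) (cc d j hd x))
    (z := fun o : Option (Fin d) => o.elim 0 (zv d j)) ?_ ?_ ?_
  · rw [Fintype.sum_option] at this
    simp only [Option.elim, smul_zero, zero_add] at this
    rw [← sum_cc_zv d j hd hj hjd] at this
    exact this
  · rintro (_ | k) -
    · simpa using hx'
    · exact hx k
  · rw [Fintype.sum_option]; simp
  · rintro (_ | k) -
    · apply subset_convexHull; left; left; rfl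
    · apply subset_convexHull; exact zv_mem d j k

lemma dil_eq (d j : ℕ) (hd : 0 < d) (hj : 0 < j) (hjd : j ≤ d - 1) (n : ℕ) :
    dil n (Pdj d j) = Reg d j hd n := by
  rw [Set.Subset.antisymm (Pdj_sub d j hd hj hjd) (Reg_sub d j hd hj hjd)]
  ext x
  constructor
  · rintro ⟨p, ⟨hp, hp'⟩, rfl⟩
    refine ⟨fun k => ?_, ?_⟩
    · show 0 ≤ cc d j hd ((n : ℝ) • p) k
      rw [cc_smul]; have := hp k; positivity
    · show ∑ k, cc d j hd ((n : ℝ) • p) k ≤ n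
      simp only [cc_smul, ← Finset.mul_sum]
      nlinarith [(Nat.cast_nonneg n : (0:ℝ) ≤ n)]
  · rintro ⟨hx, hx'⟩
    rcases Nat.eq_zero_or_pos n with rfl | hn
    · have h0 : ∀ k, cc d j hd x k = 0 := by
        have := (Finset.sum_eq_zero_iff_of_nonneg (fun k _ => hx k)).1
          (le_antisymm (by simpa using hx') (Finset.sum_nonneg fun k _ => hx k))
        intro k; exact this k (Finset.mem_univ k)
      have : x = 0 := by
        rw [sum_cc_zv d j hd hj hjd x]; simp [h0]
      subst this
      exact ⟨0, by simp [Reg, cc], by simp⟩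
    · have hn0 : (0:ℝ) < n := by positivity
      refine ⟨(n : ℝ)⁻¹ • x, ⟨fun k => ?_, ?_⟩, ?_⟩
      · rw [cc_smul]; have := hx k; positivity
      · simp only [cc_smul, ← Finset.mul_sum]
        rw [inv_mul_le_iff₀ hn0]; simpa using hx'
      · simp [smul_smul, hn0.ne']

/-- Degree of the residue `r`. -/
def hh (j r : ℕ) : ℕ := if r = 0 then 0 else j + 1 - r

/-- Parametrization of lattice points. -/
def phi (d j : ℕ) (hd : 0 < d) (p : ℕ × (Fin d → ℕ)) (k : Fin d) : ℕ :=
  if k = LL d hd then p.2 k * j + p.1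
  else p.2 k + if (k : ℕ) + 1 ≤ j then p.2 (LL d hd) + (if p.1 = 0 then 0 else 1) else 0

lemma phi_inj (d j : ℕ) (hd : 0 < d) (hj : 0 < j) {p q : ℕ × (Fin d → ℕ)}
    (hp : p.1 < j) (hq : q.1 < j) (h : phi d j hd p = phi d j hd q) : p = q := by
  have hL := congrFun h (LL d hd)
  simp only [phi, if_true] at hL
  have h1 : p.1 = q.1 := by
    have := congrArg (· % j) hL
    simpa [Nat.add_mod, Nat.mod_eq_of_lt hp, Nat.mod_eq_of_lt hq] using this
  have h2 : p.2 (LL d hd) = q.2 (LL d hd) := by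
    rw [h1] at hL
    exact Nat.eq_of_mul_eq_mul_right hj (by omega)
  refine Prod.ext h1 (funext fun k => ?_)
  by_cases hk : k = LL d hd
  · rw [hk, h2]
  · have := congrFun h k
    simp only [phi, hk, if_false, h1, h2] at this
    omega

lemma cc_phi (d j : ℕ) (hd : 0 < d) (hj : 0 < j) (hjd : j ≤ d - 1) (p : ℕ × (Fin d → ℕ))
    (k : Fin d) :
    cc d j hd (fun k => (phi d j hd p k : ℝ)) k = p.2 k
      + (if (k : ℕ) + 1 ≤ j then (if p.1 = 0 then (0:ℝ) else 1) - p.1 / j else 0)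
      + (if k = LL d hd then (p.1 : ℝ) / j else 0) := by
  have hj0 : (j : ℝ) ≠ 0 := by positivity
  have hL : ¬ ((LL d hd : Fin d) : ℕ) + 1 ≤ j := by simp [LL]; omega
  by_cases hk : k = LL d hd
  · subst hk
    simp [cc, phi, hL]
    field_simp
  · simp only [cc, phi, hk, if_true, if_false]
    split_ifs <;> push_cast <;> field_simp <;> ring

lemma sum_cc_phi (d j : ℕ) (hd : 0 < d) (hj : 0 < j) (hjd : j ≤ d - 1) (p : ℕ × (Fin d → ℕ)) :
    ∑ k, cc d j hd (fun k => (phi d j hd p k : ℝ)) k = ((∑ k, p.2 k : ℕ) : ℝ)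
      + j * ((if p.1 = 0 then (0:ℝ) else 1) - p.1 / j) + (p.1 : ℝ) / j := by
  simp only [cc_phi d j hd hj hjd, Finset.sum_add_distrib, Finset.sum_ite_eq', Finset.mem_univ,
    if_true, Nat.cast_sum]
  congr 2
  rw [← Finset.sum_filter, Finset.sum_const, nsmul_eq_mul]
  congr 2
  have : (Finset.univ.filter fun k : Fin d => (k : ℕ) + 1 ≤ j).card
      = (Finset.range j).card := by
    rw [← Finset.card_map Fin.valEmbedding]
    congr 1
    ext a
    simp only [Finset.mem_map, Finset.mem_filter, Finset.mem_univ, true_and, Fin.valEmbedding_apply,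
      Finset.mem_range]
    constructor
    · rintro ⟨b, hb, rfl⟩; omega
    · intro ha; exact ⟨⟨a, by omega⟩, by simpa using ha, rfl⟩
  simpa using this

lemma phi_mem (d j : ℕ) (hd : 0 < d) (hj : 0 < j) (hjd : j ≤ d - 1) (p : ℕ × (Fin d → ℕ))
    (hp : p.1 < j) (n : ℕ) :
    (fun k => (phi d j hd p k : ℝ)) ∈ Reg d j hd n ↔ ∑ k, p.2 k + hh j p.1 ≤ n := by
  have hj0 : (0:ℝ) < j := by positivity
  have hpj : (p.1 : ℝ) / j < 1 := by rw [div_lt_one hj0]; exact_mod_cast hp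
  have hp0 : 0 ≤ (p.1 : ℝ) / j := by positivity
  have hpos : ∀ k, 0 ≤ cc d j hd (fun k => (phi d j hd p k : ℝ)) k := by
    intro k
    rw [cc_phi d j hd hj hjd]
    have : (0:ℝ) ≤ p.2 k := by positivity
    split_ifs with h1 h2 <;> simp_all <;> linarith
  rw [Reg, Set.mem_setOf_eq, and_iff_right hpos, sum_cc_phi d j hd hj hjd, hh]
  split_ifs with h
  · simp [h]; norm_cast
  · have hp1 : 0 < (p.1 : ℝ) / j := by have : 0 < p.1 := by omega
                                       positivity
    have e : (j : ℝ) * (1 - p.1 / j) = ((j - p.1 : ℕ) : ℝ) := by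
      rw [Nat.cast_sub hp.le]; field_simp
    rw [e, ← Nat.cast_add]
    constructor
    · intro h
      have : ((∑ k, p.2 k + (j - p.1) : ℕ) : ℝ) < n := by linarith
      have := Nat.cast_lt.1 this
      omega
    · intro h
      have : (∑ k, p.2 k + (j - p.1)) + 1 ≤ n := by omega
      have : (((∑ k, p.2 k + (j - p.1)) + 1 : ℕ) : ℝ) ≤ n := by exact_mod_cast this
      push_cast at this ⊢
      linarith

lemma phi_surj (d j : ℕ) (hd : 0 < d) (hj : 0 < j) (hjd : j ≤ d - 1) (x : Pt d)
    (hx : ∀ k, 0 ≤ cc d j hd x k) (hl : IsLat x) :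
    ∃ p : ℕ × (Fin d → ℕ), p.1 < j ∧ x = fun k => (phi d j hd p k : ℝ) := by
  have hj0 : (0:ℝ) < j := by positivity
  have hL : ¬ ((LL d hd : Fin d) : ℕ) + 1 ≤ j := by simp [LL]; omega
  have hxL : 0 ≤ x (LL d hd) := by
    have := hx (LL d hd)
    simp only [cc, hL, if_true, if_false] at this
    have h2 : 0 ≤ x (LL d hd) / j := by linarith
    rw [div_nonneg_iff] at h2
    rcases h2 with h | h
    · exact h.1
    · linarith
  have hxk : ∀ k, 0 ≤ x k := by
    intro k
    by_cases hk : k = LL d hd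
    · rwa [hk]
    · have := hx k
      simp only [cc, hk, if_false] at this
      have h2 : 0 ≤ x (LL d hd) / j := by positivity
      split_ifs at this <;> linarith
  have : ∀ k, ∃ m : ℕ, x k = m := by
    intro k
    obtain ⟨z, hz⟩ := hl k
    have : 0 ≤ z := by have := hxk k; rw [hz] at this; exact_mod_cast this
    lift z to ℕ using this
    exact ⟨z, by simpa using hz⟩
  choose m hm using this
  set M := m (LL d hd) with hM
  have key : ∀ k : Fin d, (k : ℕ) + 1 ≤ j → M / j + (if M % j = 0 then 0 else 1) ≤ m k := by
    intro k hk
    have hkL : k ≠ LL d hd := by rintro rfl; exact hL hk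
    have h := hx k
    simp only [cc, hk, hkL, if_true, if_false, hm] at h
    have h3 : (M : ℝ) / j ≤ m k := by linarith
    rw [div_le_iff₀ hj0] at h3
    have h4 : M ≤ m k * j := by exact_mod_cast h3
    have h5 := Nat.div_add_mod M j
    split_ifs with h6
    · simpa using Nat.div_le_of_le_mul (by rwa [mul_comm])
    · have : j * (M / j) < j * m k := by rw [mul_comm j (m k)]; omega
      have := lt_of_mul_lt_mul_left this (Nat.zero_le j)
      omega
  refine ⟨(M % j, fun k => if k = LL d hd then M / j else
    m k - if (k : ℕ) + 1 ≤ j then M / j + (if M % j = 0 then 0 else 1) else 0),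
    Nat.mod_lt _ hj, funext fun k => ?_⟩
  rw [hm, Nat.cast_inj]
  by_cases hk : k = LL d hd
  · subst hk
    simp only [phi, if_true]
    rw [mul_comm, Nat.div_add_mod]
  · simp only [phi, hk, if_true, if_false]
    by_cases h : (k : ℕ) + 1 ≤ j
    · have := key k h
      simp only [h, if_true]; omega
    · simp [h]

/-- Bounded tuples. -/
def BF (d n h : ℕ) : Finset (Fin d → ℕ) :=
  if h ≤ n then ((Finset.univ : Finset (Option (Fin d))).finsuppAntidiag (n - h)).image
    (fun f k => f (some k)) else ∅

lemma mem_BF (d n h : ℕ) (y : Fin d → ℕ) : y ∈ BF d n h ↔ ∑ k, y k + h ≤ n := by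
  unfold BF
  split_ifs with hn
  · simp only [Finset.mem_image, Finset.mem_finsuppAntidiag, Fintype.sum_option]
    constructor
    · rintro ⟨f, ⟨hf, -⟩, rfl⟩
      beta_reduce
      omega
    · intro hy
      refine ⟨Finsupp.equivFunOnFinite.symm (fun o => o.elim (n - h - ∑ k, y k) y), ⟨?_, ?_⟩, ?_⟩
      · simp; omega
      · simp
      · funext k; simp
  · simp; omega

lemma card_BF (d n h : ℕ) : (BF d n h).card = if h ≤ n then (d + (n - h)).choose d else 0 := by
  unfold BF
  split_ifs with hn
  · rw [Finset.card_image_of_injOn, Finset.card_finsuppAntidiag_nat_eq_choose]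
    · simp only [Finset.card_univ, Fintype.card_option, Fintype.card_fin]
      rw [Nat.choose_symm_add]
      congr 1
      omega
    · intro f hf g hg hfg
      simp only [Finset.mem_coe, Finset.mem_finsuppAntidiag, Fintype.sum_option] at hf hg
      have hk : ∀ k, f (some k) = g (some k) := fun k => congrFun hfg k
      ext (_ | k)
      · have := hf.1; have := hg.1; simp only [hk] at *; omega
      · exact hk k
  · simp

lemma ehr_eq (d j : ℕ) (hd : 0 < d) (hj : 0 < j) (hjd : j ≤ d - 1) (n : ℕ) :
    ehr (Pdj d j) n =
      ∑ r ∈ Finset.range j, if hh j r ≤ n then (d + (n - hh j r)).choose d else 0 := by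
  have : latPts (dil n (Pdj d j)) = (fun p : ℕ × (Fin d → ℕ) => (fun k => (phi d j hd p k : ℝ) : Pt d)) ''
      (((Finset.range j).biUnion fun r => (BF d n (hh j r)).image (fun y => (r, y)) :
        Finset (ℕ × (Fin d → ℕ))) : Set (ℕ × (Fin d → ℕ))) := by
    ext x
    rw [latPts, dil_eq d j hd hj hjd]
    simp only [Set.mem_setOf_eq, Set.mem_image, Finset.mem_coe, Finset.mem_biUnion,
      Finset.mem_range, Finset.mem_image, mem_BF]
    constructor
    · rintro ⟨hx, hl⟩
      obtain ⟨p, hp, rfl⟩ := phi_surj d j hd hj hjd x hx.1 hl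
      rw [phi_mem d j hd hj hjd p hp] at hx
      exact ⟨p, ⟨p.1, hp, p.2, hx, rfl⟩, rfl⟩
    · rintro ⟨p, ⟨r, hr, y, hy, rfl⟩, rfl⟩
      exact ⟨(phi_mem d j hd hj hjd (r, y) hr n).2 hy, fun k => ⟨(phi d j hd (r, y) k : ℕ), by simp⟩⟩
  rw [ehr, this, Set.ncard_image_of_injOn, Set.ncard_coe_finset, Finset.card_biUnion]
  · refine Finset.sum_congr rfl fun r _ => ?_
    rw [Finset.card_image_of_injective _ (fun a b h => (Prod.ext_iff.1 h).2), card_BF]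
  · intro a _ b _ hab
    show Disjoint _ _
    rw [Finset.disjoint_left]
    simp only [Finset.mem_image]
    rintro p ⟨y, -, rfl⟩ ⟨y', -, h⟩
    exact hab (Prod.ext_iff.1 h).1.symm
  · intro p hp q hq h
    simp only [Finset.mem_coe, Finset.mem_biUnion, Finset.mem_range, Finset.mem_image] at hp hq
    obtain ⟨r, hr, y, _, rfl⟩ := hp
    obtain ⟨r', hr', y', _, rfl⟩ := hq
    refine phi_inj d j hd hj hr hr' (funext fun k => ?_)
    have : (phi d j hd (r, y) k : ℝ) = phi d j hd (r', y') k := congrFun h k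
    exact_mod_cast this

open PowerSeries in
lemma delta_eq (d j : ℕ) (hd : 0 < d) (hj : 0 < j) (hjd : j ≤ d - 1) (i : ℕ) :
    deltaVec (Pdj d j) d i = ∑ r ∈ Finset.range j, if i = hh j r then 1 else 0 := by
  have hE : (PowerSeries.mk fun n => (ehr (Pdj d j) n : ℤ)) =
      (∑ r ∈ Finset.range j, (X : ℤ⟦X⟧) ^ hh j r) * (PowerSeries.mk fun n => ((d + n).choose d : ℤ)) := by
    ext n
    rw [Finset.sum_mul, map_sum, coeff_mk, ehr_eq d j hd hj hjd]
    push_cast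
    refine Finset.sum_congr rfl fun r _ => ?_
    rw [coeff_X_pow_mul']
    split_ifs <;> simp
  have hP : ∀ t, coeff t ((1 - X : ℤ⟦X⟧) ^ (d + 1)) = (-1) ^ t * ((d + 1).choose t : ℤ) := by
    intro t
    have : (1 - X : ℤ⟦X⟧) ^ (d + 1) =
        rescale (-1) (((1 + Polynomial.X : Polynomial ℤ) ^ (d + 1) : Polynomial ℤ) : ℤ⟦X⟧) := by
      have hX : rescale (-1 : ℤ) X = -X := evalNegHom_X
      simp [hX, sub_eq_add_neg]
    rw [this, coeff_rescale, Polynomial.coeff_coe, Polynomial.coeff_one_add_X_pow]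
  have h1 : deltaVec (Pdj d j) d i
      = coeff i ((1 - X : ℤ⟦X⟧) ^ (d + 1) * PowerSeries.mk fun n => (ehr (Pdj d j) n : ℤ)) := by
    rw [coeff_mul, Finset.Nat.sum_antidiagonal_eq_sum_range_succ_mk]
    simp only [hP, coeff_mk, deltaVec]
  rw [h1, hE, mul_comm, mul_assoc, mk_add_choose_mul_one_sub_pow_eq_one, mul_one, map_sum]
  simp only [coeff_X_pow]

lemma delta_val (d j : ℕ) (hd : 0 < d) (hj : 0 < j) (hjd : j ≤ d - 1) (i : ℕ) :
    deltaVec (Pdj d j) d i = if i = 0 ∨ (2 ≤ i ∧ i ≤ j) then 1 else 0 := by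
  rw [delta_eq d j hd hj hjd]
  split_ifs with h
  · rw [Finset.sum_eq_single_of_mem (if i = 0 then 0 else j + 1 - i)]
    · rw [if_pos]; unfold hh; split_ifs <;> omega
    · rw [Finset.mem_range]; split_ifs <;> omega
    · intro b hb hne
      rw [Finset.mem_range] at hb
      rw [if_neg]
      unfold hh
      split_ifs at hne ⊢ <;> omega
  · refine Finset.sum_eq_zero fun r hr => ?_
    rw [Finset.mem_range] at hr
    rw [if_neg]
    unfold hh
    split_ifs <;> omega

lemma empty_Pdj (d j : ℕ) (hd : 0 < d) (hj : 0 < j) (hjd : j ≤ d - 1) (x : Pt d)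
    (hx : x ∈ Pdj d j) (hl : IsLat x) : x ∈ Vdj d j := by
  have hR := Pdj_sub d j hd hj hjd hx
  obtain ⟨⟨r, y⟩, hp, rfl⟩ := phi_surj d j hd hj hjd x hR.1 hl
  simp only at hp
  rw [← Nat.cast_one, phi_mem d j hd hj hjd _ hp] at hR
  have hr : r = 0 := by
    by_contra h
    simp only [hh, h, if_false] at hR
    omega
  subst hr
  have hs : ∑ k, y k ≤ 1 := by simpa [hh] using hR
  by_cases h0 : ∀ k, y k = 0
  · left; left
    funext k
    simp [phi, h0]
  · push Not at h0
    obtain ⟨k, hk⟩ := h0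
    have hy : ∀ l, y l = if l = k then 1 else 0 := by
      intro l
      rw [← Finset.add_sum_erase _ _ (Finset.mem_univ k)] at hs
      split_ifs with h
      · subst h; omega
      · have := Finset.single_le_sum (f := y) (fun _ _ => Nat.zero_le _)
          (Finset.mem_erase.2 ⟨h, Finset.mem_univ l⟩)
        omega
    have : (fun l => (phi d j hd (0, y) l : ℝ)) = zv d j k := by
      have hL : ¬ ((LL d hd : Fin d) : ℕ) + 1 ≤ j := by simp [LL]; omega
      funext l
      simp only [phi, hy, zv, eq_LL hd]
      by_cases h1 : k = LL d hd
      · subst h1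
        by_cases h2 : l = LL d hd
        · subst h2; simp [hL]
        · simp [h2]
      · have h1' : ¬ LL d hd = k := fun h => h1 h.symm
        by_cases h2 : l = LL d hd
        · subst h2; simp [h1, h1']
        · simp [h2, h1, h1']
    rw [this]
    exact zv_mem d j k

/-- the δ-vector of `P(d,j)` is `(1,0,1,…,1,0,…,0)` with ones in
positions `2,…,j`; its entries sum to the normalized volume `j`; `P(d,j)` is an
empty simplex (`δ₁ = 0`), and `μ_Ehr(P(d,j)) = j`. -/
theorem delta_vector_Pdj (d j : ℕ) (hd : 3 ≤ d) (hj2 : 2 ≤ j) (hjd : j ≤ d - 1) :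
    deltaVec (Pdj d j) d 0 = 1 ∧
    deltaVec (Pdj d j) d 1 = 0 ∧
    (∀ i, 2 ≤ i → i ≤ j → deltaVec (Pdj d j) d i = 1) ∧
    (∀ i, j < i → i ≤ d → deltaVec (Pdj d j) d i = 0) ∧
    (∑ i ∈ Finset.range (d + 1), deltaVec (Pdj d j) d i = (j : ℤ)) ∧
    (∀ x ∈ Pdj d j, IsLat x → x ∈ Vdj d j) ∧
    IsGreatest {i : ℕ | i ≤ d ∧ deltaVec (Pdj d j) d i ≠ 0} j := by
  have h0 : 0 < d := by omega
  have hj : 0 < j := by omega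
  have hv := delta_val d j h0 hj hjd
  refine ⟨by rw [hv]; simp, by rw [hv]; simp, fun i h2 hi => ?_, fun i h2 hi => ?_, ?_,
    fun x hx hl => empty_Pdj d j h0 hj hjd x hx hl, ⟨by omega, ?_⟩, ?_⟩
  · rw [hv, if_pos (Or.inr ⟨h2, hi⟩)]
  · rw [hv, if_neg (by omega)]
  · simp only [delta_eq d j h0 hj hjd]
    rw [Finset.sum_comm]
    have : ∀ r ∈ Finset.range j, (∑ i ∈ Finset.range (d + 1), if i = hh j r then (1:ℤ) else 0) = 1 := by
      intro r hr
      rw [Finset.mem_range] at hr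
      rw [Finset.sum_ite_eq', if_pos]
      rw [Finset.mem_range]; unfold hh; split_ifs <;> omega
    rw [Finset.sum_congr rfl this]; simp
  · rw [hv, if_pos (Or.inr ⟨hj2, le_rfl⟩)]; norm_num
  · rintro i ⟨hi, hne⟩
    rw [hv] at hne
    by_contra hlt
    exact hne (if_neg (by omega))
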